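/- arXiv:2109.02709 — 2 statements merged into one kernel-verified Lean document; each statement's English description precedes it below -/
import Mathlib

section
/- Let φ be a non-trivial (non-affine) Bernstein function with φ(0) = 0 and φ(∞) = ∞, let Ψ be its inverse, let (μ_t)_{t>0} be the family of marginal laws of the subordinator associated with φ, and let p ≥ 1. Then Ψ^p is convex on (0,∞), the right limit (Ψ^p)'(0+) exists in [0,∞), and the following are equivalent: (i) x ↦ e^{−t x} Ψ(x)^p is integrable in a neighborhood of ∞ for all t > 0; (ii) t ↦ t·E[ξ_t^{−p}] = t·∫ x^{−p} μ_t(dx) is finite for every t > 0 and is completely monotone on (0,∞). In that case, for all t > 0, t·E[ξ_t^{−p}] = (1/Γ(p+1)) [ (Ψ^p)'(0+) + ∫₀^∞ e^{−t x} (Ψ^p)''(x) dx ]. -/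
open MeasureTheory Set Filter

/-- A Bernstein function on `(0,∞)`: a nonnegative smooth function whose derivatives satisfy
`(−1)^{n−1} f^{(n)} ≥ 0` on `(0,∞)` for every `n ≥ 1`. -/
def IsBernsteinFn (f : ℝ → ℝ) : Prop :=
  (∀ x : ℝ, 0 < x → 0 ≤ f x) ∧ ContDiffOn ℝ (⊤ : ℕ∞) f (Ioi 0) ∧
    ∀ n : ℕ, 1 ≤ n → ∀ x : ℝ, 0 < x → 0 ≤ (-1 : ℝ) ^ (n - 1) * iteratedDeriv n f x

/-- A completely monotone function on `(0,∞)`: a smooth function with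
`(−1)^n f^{(n)} ≥ 0` on `(0,∞)` for every `n ≥ 0`. -/
def IsCompletelyMonotoneFn (f : ℝ → ℝ) : Prop :=
  ContDiffOn ℝ (⊤ : ℕ∞) f (Ioi 0) ∧
    ∀ n : ℕ, ∀ x : ℝ, 0 < x → 0 ≤ (-1 : ℝ) ^ n * iteratedDeriv n f x

/-- Fundamental theorem of calculus on `(0, x]`, in extended nonnegative reals, for a function
with nonnegative derivative on `(0, ∞)` and right limit `L` at `0`. -/
theorem ofReal_eq_add_lintegral_deriv {g : ℝ → ℝ} {L : ℝ}
    (hd : ∀ x, 0 < x → DifferentiableAt ℝ g x) (hpos : ∀ x, 0 < x → 0 ≤ deriv g x) (hL : 0 ≤ L)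
    (hlim : Tendsto g (nhdsWithin 0 (Ioi 0)) (nhds L)) {x : ℝ} (hx : 0 < x) :
    ENNReal.ofReal (g x) =
      ENNReal.ofReal L + ∫⁻ y in Ioc 0 x, ENNReal.ofReal (deriv g y) := by
  classical
  have hderiv : ∀ y, 0 < y → HasDerivAt (Function.update g 0 L) (deriv g y) y := fun y hy =>
    (hd y hy).hasDerivAt.congr_of_eventuallyEq <| by
      filter_upwards [Ioi_mem_nhds hy] with z hz
      exact Function.update_of_ne (ne_of_gt hz) _ _
  have hcont : ContinuousOn (Function.update g 0 L) (Icc 0 x) := by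
    intro y hy
    rcases hy.1.eq_or_lt with rfl | hy0
    · rw [continuousWithinAt_update_same]
      exact hlim.mono_left (nhdsWithin_mono _ fun z hz => lt_of_le_of_ne hz.1.1 (Ne.symm hz.2))
    · exact (hderiv y hy0).continuousAt.continuousWithinAt
  have hint := intervalIntegral.integrableOn_deriv_of_nonneg hcont
    (fun y hy => hderiv y hy.1) (fun y hy => hpos y hy.1)
  have hFTC := intervalIntegral.integral_eq_sub_of_hasDerivAt_of_le hx.le hcont
    (fun y hy => hderiv y hy.1) ((intervalIntegrable_iff_integrableOn_Ioc_of_le hx.le).2 hint)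
  have hnn : 0 ≤ᵐ[volume.restrict (Ioc 0 x)] deriv g :=
    (ae_restrict_iff' measurableSet_Ioc).2 (.of_forall fun y hy => hpos y hy.1)
  rw [intervalIntegral.integral_of_le hx.le, Function.update_self,
    Function.update_of_ne hx.ne'] at hFTC
  rw [← ofReal_integral_eq_lintegral_ofReal hint hnn,
    ← ENNReal.ofReal_add hL (integral_nonneg_of_ae hnn), hFTC]
  congr 1
  ring

/-- The tail of the exponential density. -/
theorem lintegral_Ioi_exp_neg_mul {t : ℝ} (ht : 0 < t) (y : ℝ) :
    ∫⁻ x in Ioi y, ENNReal.ofReal (t * Real.exp (-t * x)) =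
      ENNReal.ofReal (Real.exp (-t * y)) := by
  rw [← ofReal_integral_eq_lintegral_ofReal
    ((integrableOn_exp_mul_Ioi (neg_lt_zero.2 ht) y).const_mul t)
    (.of_forall fun x => by positivity), integral_const_mul,
    integral_exp_mul_Ioi (neg_lt_zero.2 ht)]
  congr 1
  field_simp

/-- Integration by parts for Laplace transforms of functions with nonnegative derivative. -/
theorem lintegral_exp_mul_eq_add_lintegral_exp_deriv {g : ℝ → ℝ} {L t : ℝ} (ht : 0 < t)
    (hd : ∀ x, 0 < x → DifferentiableAt ℝ g x) (hpos : ∀ x, 0 < x → 0 ≤ deriv g x) (hL : 0 ≤ L)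
    (hlim : Tendsto g (nhdsWithin 0 (Ioi 0)) (nhds L)) :
    ∫⁻ x in Ioi (0 : ℝ), ENNReal.ofReal (t * Real.exp (-t * x)) * ENNReal.ofReal (g x) =
      ENNReal.ofReal L +
        ∫⁻ x in Ioi (0 : ℝ), ENNReal.ofReal (Real.exp (-t * x)) * ENNReal.ofReal (deriv g x) := by
  have hme : Measurable fun x : ℝ => ENNReal.ofReal (t * Real.exp (-t * x)) := by fun_prop
  have hmd : Measurable fun x : ℝ => ENNReal.ofReal (deriv g x) :=
    (measurable_deriv g).ennreal_ofReal
  have hexpand : ∀ x ∈ Ioi (0 : ℝ),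
      ENNReal.ofReal (t * Real.exp (-t * x)) * ENNReal.ofReal (g x) =
        ENNReal.ofReal (t * Real.exp (-t * x)) * ENNReal.ofReal L +
          ∫⁻ y in Ioi (0 : ℝ), {q : ℝ × ℝ | q.2 ≤ q.1}.indicator (fun q =>
            ENNReal.ofReal (t * Real.exp (-t * q.1)) * ENNReal.ofReal (deriv g q.2)) (x, y) := by
    intro x hx
    rw [ofReal_eq_add_lintegral_deriv hd hpos hL hlim hx, mul_add]
    congr 1
    rw [← lintegral_const_mul _ hmd, ← Ioi_inter_Iic, inter_comm,
      ← setLIntegral_indicator measurableSet_Iic]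
    rfl
  have hswap : Measurable ({q : ℝ × ℝ | q.2 ≤ q.1}.indicator (fun q : ℝ × ℝ =>
      ENNReal.ofReal (t * Real.exp (-t * q.1)) * ENNReal.ofReal (deriv g q.2))) :=
    ((hme.comp measurable_fst).mul (hmd.comp measurable_snd)).indicator
      (measurableSet_le measurable_snd measurable_fst)
  rw [setLIntegral_congr_fun measurableSet_Ioi hexpand, lintegral_add_left (by fun_prop),
    lintegral_mul_const _ hme, lintegral_Ioi_exp_neg_mul ht, lintegral_lintegral_swap
      (f := fun x y => {q : ℝ × ℝ | q.2 ≤ q.1}.indicator (fun q : ℝ × ℝ =>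
        ENNReal.ofReal (t * Real.exp (-t * q.1)) * ENNReal.ofReal (deriv g q.2)) (x, y))
      hswap.aemeasurable]
  congr 1
  · simp
  refine setLIntegral_congr_fun measurableSet_Ioi fun y hy => ?_
  rw [← lintegral_Ioi_exp_neg_mul ht y, ← lintegral_mul_const _ hme,
    setLIntegral_congr (Ioi_ae_eq_Ici (a := y))]
  have hsub : Ici y = Ici y ∩ Ioi 0 :=
    (inter_eq_left.2 (Ici_subset_Ioi.2 hy)).symm
  rw [hsub, ← setLIntegral_indicator measurableSet_Ici]
  rfl

/-- Negative moments of a probability measure on `(0, ∞)` in terms of its Laplace transform. -/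
theorem Gamma_mul_lintegral_rpow_neg (m : Measure ℝ) [IsProbabilityMeasure m]
    (hm : m {x | x ≤ 0} = 0) {p : ℝ} (hp : 0 < p) :
    ENNReal.ofReal (Real.Gamma p) * ∫⁻ x, ENNReal.ofReal (x ^ (-p)) ∂m =
      ∫⁻ l in Ioi (0 : ℝ), ENNReal.ofReal (l ^ (p - 1)) *
        ENNReal.ofReal (∫ x, Real.exp (-l * x) ∂m) := by
  have hpos : ∀ᵐ x ∂m, 0 < x := by
    rw [ae_iff]
    simpa only [not_lt] using hm
  have hinner : ∀ l ∈ Ioi (0 : ℝ),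
      ENNReal.ofReal (l ^ (p - 1)) * ENNReal.ofReal (∫ x, Real.exp (-l * x) ∂m) =
        ∫⁻ x, ENNReal.ofReal (l ^ (p - 1)) * ENNReal.ofReal (Real.exp (-l * x)) ∂m := by
    intro l hl
    rw [lintegral_const_mul _ (by fun_prop), ofReal_integral_eq_lintegral_ofReal _
      (.of_forall fun x => (Real.exp_pos _).le)]
    refine Integrable.of_bound (C := 1) (by fun_prop) ?_
    filter_upwards [hpos] with x hx
    rw [Real.norm_of_nonneg (Real.exp_pos _).le, Real.exp_le_one_iff]
    have := mul_pos hl hx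
    linarith
  rw [setLIntegral_congr_fun measurableSet_Ioi hinner, lintegral_lintegral_swap (by fun_prop),
    ← lintegral_const_mul _ (by fun_prop)]
  refine lintegral_congr_ae ?_
  filter_upwards [hpos] with x hx
  have hG := Real.integral_rpow_mul_exp_neg_mul_Ioi hp hx
  have hint : IntegrableOn (fun l : ℝ => l ^ (p - 1) * Real.exp (-(x * l))) (Ioi 0) := by
    by_contra h
    rw [integral_undef h] at hG
    have := Real.Gamma_pos_of_pos hp
    have : 0 < (1 / x) ^ p * Real.Gamma p := by positivity
    linarith
  have hnn : 0 ≤ᵐ[volume.restrict (Ioi 0)] fun l : ℝ => l ^ (p - 1) * Real.exp (-(x * l)) :=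
    (ae_restrict_iff' measurableSet_Ioi).2
      (.of_forall fun l hl => mul_nonneg (Real.rpow_nonneg (le_of_lt hl) _) (Real.exp_pos _).le)
  rw [← ENNReal.ofReal_mul (Real.Gamma_pos_of_pos hp).le, Real.rpow_neg hx.le,
    ← Real.inv_rpow hx.le, inv_eq_one_div, mul_comm (Real.Gamma p), ← hG,
    ofReal_integral_eq_lintegral_ofReal hint hnn]
  refine setLIntegral_congr_fun measurableSet_Ioi fun l hl => ?_
  rw [← ENNReal.ofReal_mul (Real.rpow_nonneg (le_of_lt hl) _)]
  ring_nf

/-- Complete monotonicity only depends on the values on `(0, ∞)`. -/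
theorem IsCompletelyMonotoneFn.congr {f g : ℝ → ℝ} (hf : IsCompletelyMonotoneFn f)
    (hfg : EqOn g f (Ioi 0)) : IsCompletelyMonotoneFn g := by
  refine ⟨hf.1.congr hfg, fun n x hx => ?_⟩
  rw [(hfg.eventuallyEq_of_mem (Ioi_mem_nhds hx)).iteratedDeriv_eq]
  exact hf.2 n x hx

/-- The Laplace transform of a measure on `[0, ∞)` is completely monotone as soon as it is finite
on `(0, ∞)`. -/
theorem isCompletelyMonotoneFn_laplace (ν : Measure ℝ) (hν : ∀ᵐ x ∂ν, 0 ≤ x)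
    (hfin : ∀ t : ℝ, 0 < t → ∫⁻ x, ENNReal.ofReal (Real.exp (-t * x)) ∂ν ≠ ⊤) :
    IsCompletelyMonotoneFn fun t => (∫⁻ x, ENNReal.ofReal (Real.exp (-t * x)) ∂ν).toReal := by
  have hmgf : (fun t : ℝ => (∫⁻ x, ENNReal.ofReal (Real.exp (-t * x)) ∂ν).toReal) =
      ProbabilityTheory.mgf (fun x => -x) ν := by
    funext t
    rw [ProbabilityTheory.mgf, integral_eq_lintegral_of_nonneg_ae
      (.of_forall fun x => (Real.exp_pos _).le) (by fun_prop)]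
    simp only [neg_mul, mul_neg]
  have hsub : Ioi (0 : ℝ) ⊆ interior (ProbabilityTheory.integrableExpSet (fun x => -x) ν) := by
    refine interior_maximal (fun t ht => ?_) isOpen_Ioi
    have : Integrable (fun x => Real.exp (-t * x)) ν :=
      (lintegral_ofReal_ne_top_iff_integrable (by fun_prop)
        (.of_forall fun x => (Real.exp_pos _).le)).1 (hfin t ht)
    simpa only [ProbabilityTheory.integrableExpSet, mem_ofPred_eq, mul_neg, neg_mul] using this
  rw [hmgf]
  refine ⟨fun t ht =>
    (ProbabilityTheory.analyticAt_mgf (hsub ht)).contDiffAt.contDiffWithinAt, fun n t ht => ?_⟩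
  rw [ProbabilityTheory.iteratedDeriv_mgf (hsub ht), ← integral_const_mul]
  refine integral_nonneg_of_ae ?_
  filter_upwards [hν] with x hx
  rw [Pi.zero_apply, ← mul_assoc, ← mul_pow, neg_one_mul, neg_neg]
  positivity

/-- A Laplace transform of a probability measure on `(0, ∞)` tends to `1` at `0`. -/
theorem tendsto_laplace_one (m : Measure ℝ) [IsProbabilityMeasure m] (hm : m {x | x ≤ 0} = 0) :
    Tendsto (fun l : ℝ => ∫ x, Real.exp (-l * x) ∂m) (nhdsWithin 0 (Ioi 0)) (nhds 1) := by
  have hpos : ∀ᵐ x ∂m, 0 < x := by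
    rw [ae_iff]
    simpa only [not_lt] using hm
  have h1 : (1 : ℝ) = ∫ _, (1 : ℝ) ∂m := by simp
  rw [h1]
  refine tendsto_integral_filter_of_dominated_convergence (fun _ => 1)
    (.of_forall fun l => by fun_prop) ?_ (integrable_const _) (.of_forall fun x => ?_)
  · filter_upwards [self_mem_nhdsWithin] with l hl
    filter_upwards [hpos] with x hx
    rw [Real.norm_of_nonneg (Real.exp_pos _).le, Real.exp_le_one_iff]
    have := mul_pos (mem_Ioi.1 hl) hx
    linarith
  · have : Continuous fun l : ℝ => Real.exp (-l * x) := by fun_prop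
    simpa using (this.tendsto 0).mono_left nhdsWithin_le_nhds

theorem IsBernsteinFn.differentiableAt {φ : ℝ → ℝ} (hφ : IsBernsteinFn φ) {x : ℝ} (hx : 0 < x) :
    DifferentiableAt ℝ φ x :=
  (hφ.2.1.contDiffAt (Ioi_mem_nhds hx)).differentiableAt (by simp)

theorem IsBernsteinFn.differentiableAt_deriv {φ : ℝ → ℝ} (hφ : IsBernsteinFn φ) {x : ℝ}
    (hx : 0 < x) : DifferentiableAt ℝ (deriv φ) x := by
  have h : ContDiffOn ℝ 1 (deriv φ) (Ioi 0) :=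
    hφ.2.1.deriv_of_isOpen isOpen_Ioi (by norm_cast)
  exact (h.contDiffAt (Ioi_mem_nhds hx)).differentiableAt (by simp)

theorem IsBernsteinFn.deriv_nonneg {φ : ℝ → ℝ} (hφ : IsBernsteinFn φ) {x : ℝ} (hx : 0 < x) :
    0 ≤ deriv φ x := by
  simpa using hφ.2.2 1 le_rfl x hx

theorem IsBernsteinFn.antitoneOn_deriv {φ : ℝ → ℝ} (hφ : IsBernsteinFn φ) :
    AntitoneOn (deriv φ) (Ioi 0) := by
  refine antitoneOn_of_deriv_nonpos (convex_Ioi 0)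
    (fun x hx => (hφ.differentiableAt_deriv hx).continuousAt.continuousWithinAt)
    (fun x hx => ?_) fun x hx => ?_
  · rw [interior_Ioi] at hx
    exact (hφ.differentiableAt_deriv hx).differentiableWithinAt
  · rw [interior_Ioi] at hx
    have := hφ.2.2 2 one_le_two x hx
    norm_num [iteratedDeriv_succ, iteratedDeriv_zero] at this
    linarith

theorem IsBernsteinFn.monotoneOn {φ : ℝ → ℝ} (hφ : IsBernsteinFn φ) : MonotoneOn φ (Ioi 0) := by
  refine monotoneOn_of_deriv_nonneg (convex_Ioi 0)
    (fun x hx => (hφ.differentiableAt hx).continuousAt.continuousWithinAt)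
    (fun x hx => ?_) fun x hx => ?_
  · rw [interior_Ioi] at hx
    exact (hφ.differentiableAt hx).differentiableWithinAt
  · rw [interior_Ioi] at hx
    exact hφ.deriv_nonneg hx

/-- The derivative of an injective Bernstein function is positive. -/
theorem IsBernsteinFn.deriv_pos {φ : ℝ → ℝ} (hφ : IsBernsteinFn φ)
    (hinj : InjOn φ (Ioi 0)) {x : ℝ} (hx : 0 < x) : 0 < deriv φ x := by
  refine (hφ.deriv_nonneg hx).lt_of_ne fun h => ?_
  obtain ⟨c, hc, hc'⟩ := exists_deriv_eq_slope φ (lt_add_one x)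
    (fun y hy => (hφ.differentiableAt (hx.trans_le hy.1)).continuousAt.continuousWithinAt)
    (fun y hy => (hφ.differentiableAt (hx.trans hy.1)).differentiableWithinAt)
  have h0 : deriv φ c = 0 := le_antisymm
    (h ▸ hφ.antitoneOn_deriv hx (hx.trans hc.1) hc.1.le) (hφ.deriv_nonneg (hx.trans hc.1))
  rw [h0, add_sub_cancel_left, div_one] at hc'
  have := hinj hx (by positivity : 0 < x + 1) (by linarith)
  linarith

/-- `Ψ` maps `(0, ∞)` into itself and is a two-sided inverse of `φ` there. -/
structure IsPosInverse (φ Ψ : ℝ → ℝ) : Prop where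
  map_pos : ∀ x, 0 < x → 0 < φ x
  inv_pos : ∀ y, 0 < y → 0 < Ψ y
  left_inv : ∀ x, 0 < x → Ψ (φ x) = x
  right_inv : ∀ y, 0 < y → φ (Ψ y) = y

theorem IsBernsteinFn.isPosInverse {φ Ψ : ℝ → ℝ} (hφ : IsBernsteinFn φ) (h0 : φ 0 = 0)
    (hlim : Tendsto φ (nhdsWithin 0 (Ioi 0)) (nhds 0)) (hinf : Tendsto φ atTop atTop)
    (hinv : Set.InvOn Ψ φ (Ici 0) (Ici 0)) : IsPosInverse φ Ψ := by
  have hne : ∀ x, 0 < x → 0 < φ x := fun x hx => (hφ.1 x hx).lt_of_ne fun h => by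
    have h1 := hinv.1 (mem_Ici.2 hx.le)
    have h2 := hinv.1 (mem_Ici.2 (le_refl (0 : ℝ)))
    rw [h0] at h2
    rw [← h, h2] at h1
    exact hx.ne h1
  refine ⟨hne, fun y hy => ?_, fun x hx => hinv.1 (mem_Ici.2 hx.le),
    fun y hy => hinv.2 (mem_Ici.2 hy.le)⟩
  obtain ⟨a, hay, ha⟩ := ((hlim.eventually_lt_const hy).and self_mem_nhdsWithin).exists
  obtain ⟨b, hby, hab⟩ := ((hinf.eventually_gt_atTop y).and (eventually_ge_atTop a)).exists
  obtain ⟨c, hc, rfl⟩ := intermediate_value_Icc hab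
    (fun z hz => (hφ.differentiableAt (lt_of_lt_of_le ha hz.1)).continuousAt.continuousWithinAt)
    ⟨hay.le, hby.le⟩
  have hc0 : 0 < c := lt_of_lt_of_le ha hc.1
  rwa [hinv.1 (mem_Ici.2 hc0.le)]

section Inverse

variable {φ Ψ : ℝ → ℝ}

theorem IsPosInverse.injOn (h : IsPosInverse φ Ψ) : InjOn φ (Ioi 0) := fun x hx y hy hxy => by
  rw [← h.left_inv x hx, hxy, h.left_inv y hy]

theorem IsPosInverse.image (h : IsPosInverse φ Ψ) : Ψ '' Ioi 0 = Ioi 0 :=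
  Subset.antisymm (image_subset_iff.2 h.inv_pos)
    fun x hx => ⟨φ x, h.map_pos x hx, h.left_inv x hx⟩

theorem IsPosInverse.strictMonoOn (h : IsPosInverse φ Ψ) (hφ : MonotoneOn φ (Ioi 0)) :
    StrictMonoOn Ψ (Ioi 0) := fun x hx y hy hxy => by
  by_contra! hle
  have := hφ (h.inv_pos y hy) (h.inv_pos x hx) hle
  rw [h.right_inv x hx, h.right_inv y hy] at this
  exact hxy.not_ge this

theorem IsPosInverse.tendsto_zero (h : IsPosInverse φ Ψ) (hφ : MonotoneOn φ (Ioi 0)) :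
    Tendsto Ψ (nhdsWithin 0 (Ioi 0)) (nhds 0) := by
  refine tendsto_order.2 ⟨fun a ha => ?_, fun a ha => ?_⟩
  · filter_upwards [self_mem_nhdsWithin] with x hx using ha.trans (h.inv_pos x hx)
  · filter_upwards [Ioo_mem_nhdsGT (h.map_pos a ha)] with x hx
    have := h.strictMonoOn hφ hx.1 (h.map_pos a ha) hx.2
    rwa [h.left_inv a ha] at this

theorem IsPosInverse.hasDerivAt (h : IsPosInverse φ Ψ) (hφ : IsBernsteinFn φ) {x : ℝ}
    (hx : 0 < x) : HasDerivAt Ψ (deriv φ (Ψ x))⁻¹ x := by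
  refine HasDerivAt.of_local_left_inverse ?_ (hφ.differentiableAt (h.inv_pos x hx)).hasDerivAt
    (hφ.deriv_pos h.injOn (h.inv_pos x hx)).ne' ?_
  · refine (h.strictMonoOn hφ.monotoneOn).continuousAt_of_image_mem_nhds (Ioi_mem_nhds hx) ?_
    rw [h.image]
    exact Ioi_mem_nhds (h.inv_pos x hx)
  · filter_upwards [Ioi_mem_nhds hx] with y hy using h.right_inv y hy

theorem IsPosInverse.hasDerivAt_rpow (h : IsPosInverse φ Ψ) (hφ : IsBernsteinFn φ) (p : ℝ) {x : ℝ}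
    (hx : 0 < x) :
    HasDerivAt (fun y => Ψ y ^ p) ((deriv φ (Ψ x))⁻¹ * p * Ψ x ^ (p - 1)) x :=
  (h.hasDerivAt hφ hx).rpow_const (.inl (h.inv_pos x hx).ne')

theorem IsPosInverse.deriv_rpow_nonneg (h : IsPosInverse φ Ψ) (hφ : IsBernsteinFn φ) {p : ℝ}
    (hp : 0 ≤ p) {x : ℝ} (hx : 0 < x) : 0 ≤ deriv (fun y => Ψ y ^ p) x := by
  rw [(h.hasDerivAt_rpow hφ p hx).deriv]
  have := hφ.deriv_pos h.injOn (h.inv_pos x hx)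
  have := h.inv_pos x hx
  positivity

theorem IsPosInverse.monotoneOn_deriv_rpow (h : IsPosInverse φ Ψ) (hφ : IsBernsteinFn φ) {p : ℝ}
    (hp : 1 ≤ p) : MonotoneOn (deriv fun y => Ψ y ^ p) (Ioi 0) := by
  intro x hx y hy hxy
  rw [(h.hasDerivAt_rpow hφ p hx).deriv, (h.hasDerivAt_rpow hφ p hy).deriv]
  have hΨ := (h.strictMonoOn hφ.monotoneOn).monotoneOn hx hy hxy
  have hx' := h.inv_pos x hx
  have hy' := h.inv_pos y hy
  have hdx := hφ.deriv_pos h.injOn hx'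
  have hdy := hφ.deriv_pos h.injOn hy'
  have := hφ.antitoneOn_deriv hx' hy' hΨ
  have : 0 ≤ p - 1 := by linarith
  gcongr

theorem IsPosInverse.differentiableAt_deriv_rpow (h : IsPosInverse φ Ψ) (hφ : IsBernsteinFn φ)
    (p : ℝ) {x : ℝ} (hx : 0 < x) : DifferentiableAt ℝ (deriv fun y => Ψ y ^ p) x := by
  have heq : (deriv fun y => Ψ y ^ p) =ᶠ[nhds x]
      fun y => (deriv φ (Ψ y))⁻¹ * p * Ψ y ^ (p - 1) := by
    filter_upwards [Ioi_mem_nhds hx] with y hy using (h.hasDerivAt_rpow hφ p hy).deriv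
  rw [heq.differentiableAt_iff]
  have hΨ := (h.hasDerivAt hφ hx).differentiableAt
  exact ((((hφ.differentiableAt_deriv (h.inv_pos x hx)).comp x hΨ).inv
    (hφ.deriv_pos h.injOn (h.inv_pos x hx)).ne').mul_const p).mul
    (hΨ.rpow_const (.inl (h.inv_pos x hx).ne'))

theorem IsPosInverse.deriv_deriv_rpow_nonneg (h : IsPosInverse φ Ψ) (hφ : IsBernsteinFn φ) {p : ℝ}
    (hp : 1 ≤ p) {x : ℝ} (hx : 0 < x) : 0 ≤ deriv (deriv fun y => Ψ y ^ p) x := by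
  rw [← derivWithin_of_isOpen isOpen_Ioi hx]
  exact (h.monotoneOn_deriv_rpow hφ hp).derivWithin_nonneg

theorem IsPosInverse.tendsto_rpow_zero (h : IsPosInverse φ Ψ) (hφ : MonotoneOn φ (Ioi 0)) {p : ℝ}
    (hp : 0 < p) : Tendsto (fun y => Ψ y ^ p) (nhdsWithin 0 (Ioi 0)) (nhds 0) := by
  simpa [Real.zero_rpow hp.ne'] using (h.tendsto_zero hφ).rpow_const (.inr hp.le)

/-- Change of variables `l = Ψ x` in the Laplace representation of negative moments. -/
theorem IsPosInverse.lintegral_rpow_exp (h : IsPosInverse φ Ψ) (hφ : IsBernsteinFn φ) {p : ℝ}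
    (hp : 0 < p) (t : ℝ) :
    ENNReal.ofReal p * ∫⁻ l in Ioi (0 : ℝ), ENNReal.ofReal (l ^ (p - 1)) *
        ENNReal.ofReal (Real.exp (-t * φ l)) =
      ∫⁻ x in Ioi (0 : ℝ), ENNReal.ofReal (Real.exp (-t * x)) *
        ENNReal.ofReal (deriv (fun y => Ψ y ^ p) x) := by
  have hcov := lintegral_image_eq_lintegral_deriv_mul_of_monotoneOn measurableSet_Ioi
    (fun x hx => (h.hasDerivAt hφ (mem_Ioi.1 hx)).hasDerivWithinAt)
    (h.strictMonoOn hφ.monotoneOn).monotoneOn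
    (fun l => ENNReal.ofReal (l ^ (p - 1)) * ENNReal.ofReal (Real.exp (-t * φ l)))
  rw [h.image] at hcov
  rw [hcov, ← lintegral_const_mul' _ _ ENNReal.ofReal_ne_top]
  refine setLIntegral_congr_fun measurableSet_Ioi fun x hx => ?_
  have hd := hφ.deriv_pos h.injOn (h.inv_pos x hx)
  have hΨ := h.inv_pos x hx
  simp only [h.right_inv x hx, (h.hasDerivAt_rpow hφ p hx).deriv]
  rw [← ENNReal.ofReal_mul (by positivity), ← ENNReal.ofReal_mul (by positivity),
    ← ENNReal.ofReal_mul (by positivity), ← ENNReal.ofReal_mul (by positivity)]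
  ring_nf

theorem IsPosInverse.integrableOn_exp_mul_rpow_iff (h : IsPosInverse φ Ψ) (hφ : IsBernsteinFn φ)
    {p t : ℝ} (hp : 0 < p) (ht : 0 < t) :
    IntegrableOn (fun x => Real.exp (-t * x) * Ψ x ^ p) (Ioi 1) ↔
      ∫⁻ x in Ioi (0 : ℝ), ENNReal.ofReal (Real.exp (-t * x)) *
        ENNReal.ofReal (deriv (fun y => Ψ y ^ p) x) ≠ ⊤ := by
  have hcont : ContinuousOn (fun x => Real.exp (-t * x) * Ψ x ^ p) (Ioi 0) := fun x hx =>
    ((by fun_prop : ContinuousAt (fun x => Real.exp (-t * x)) x).mul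
      (h.hasDerivAt_rpow hφ p hx).continuousAt).continuousWithinAt
  have hsmall : IntegrableOn (fun x => Real.exp (-t * x) * Ψ x ^ p) (Ioc 0 1) := by
    refine IntegrableOn.of_bound (C := 1 * Ψ 1 ^ p) (by simp)
      ((hcont.mono Ioc_subset_Ioi_self).aestronglyMeasurable measurableSet_Ioc) ?_
    refine (ae_restrict_iff' measurableSet_Ioc).2 (.of_forall fun x hx => ?_)
    have hΨ := h.inv_pos x hx.1
    rw [Real.norm_of_nonneg (by positivity)]
    have hmono := (h.strictMonoOn hφ.monotoneOn).monotoneOn hx.1 (mem_Ioi.2 one_pos) hx.2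
    have hexp : Real.exp (-t * x) ≤ 1 := by
      rw [Real.exp_le_one_iff]
      have := mul_pos ht hx.1
      linarith
    gcongr
  have hsplit : IntegrableOn (fun x => Real.exp (-t * x) * Ψ x ^ p) (Ioi 1) ↔
      IntegrableOn (fun x => Real.exp (-t * x) * Ψ x ^ p) (Ioi 0) := by
    rw [← Ioc_union_Ioi_eq_Ioi (zero_le_one' ℝ), integrableOn_union]
    exact (and_iff_right hsmall).symm
  have hparts := lintegral_exp_mul_eq_add_lintegral_exp_deriv ht
    (fun x hx => (h.hasDerivAt_rpow hφ p hx).differentiableAt)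
    (fun x hx => h.deriv_rpow_nonneg hφ hp.le hx) le_rfl (h.tendsto_rpow_zero hφ.monotoneOn hp)
  rw [ENNReal.ofReal_zero, zero_add] at hparts
  rw [hsplit, ← hparts, IntegrableOn, ← lintegral_ofReal_ne_top_iff_integrable
    (hcont.aestronglyMeasurable measurableSet_Ioi)
    ((ae_restrict_iff' measurableSet_Ioi).2 (.of_forall fun x hx =>
      mul_nonneg (Real.exp_pos _).le (Real.rpow_nonneg (h.inv_pos x hx).le _)))]
  simp only [ENNReal.ofReal_mul ht.le, ENNReal.ofReal_mul (Real.exp_pos _).le, mul_assoc]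
  rw [lintegral_const_mul' _ _ ENNReal.ofReal_ne_top, ne_eq, ne_eq, ENNReal.mul_eq_top]
  simp [ht]

end Inverse

/-- Let `φ` be a non-affine Bernstein function with `φ(0) = 0`, `φ(∞) = ∞`,
inverse `Ψ`, marginal subordinator laws `(μ_t)_{t>0}`, and let `p ≥ 1`. Then `Ψ^p` is convex
on `(0,∞)`, the right limit `(Ψ^p)'(0+)` exists in `[0,∞)`, and: (i) `x ↦ e^{−tx} Ψ(x)^p` is
integrable near `∞` for all `t > 0` iff (ii) `t ↦ t·E[ξ_t^{−p}]` is finite for every `t > 0`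
and completely monotone on `(0,∞)`. In that case
`t·E[ξ_t^{−p}] = (1/Γ(p+1)) [(Ψ^p)'(0+) + ∫₀^∞ e^{−tx} (Ψ^p)''(x) dx]` for all `t > 0`. -/
theorem stmt_7 (φ Ψ : ℝ → ℝ) (hφ : IsBernsteinFn φ)
    (hnonaffine : ¬∃ c d : ℝ, ∀ x : ℝ, 0 ≤ x → φ x = c + d * x)
    (h0 : φ 0 = 0) (hinf : Tendsto φ atTop atTop) (hinv : Set.InvOn Ψ φ (Ici 0) (Ici 0))
    (μ : ℝ → Measure ℝ) (hprob : ∀ t : ℝ, 0 < t → IsProbabilityMeasure (μ t))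
    (hsupp : ∀ t : ℝ, 0 < t → μ t {x | x ≤ 0} = 0)
    (hlaplace : ∀ t : ℝ, 0 < t → ∀ l : ℝ, 0 ≤ l →
      ∫ x, Real.exp (-l * x) ∂(μ t) = Real.exp (-t * φ l))
    (p : ℝ) (hp : 1 ≤ p) :
    ConvexOn ℝ (Ioi 0) (fun x => Ψ x ^ p) ∧
    ∃ L : ℝ, 0 ≤ L ∧
      Tendsto (deriv (fun y => Ψ y ^ p)) (nhdsWithin 0 (Ioi 0)) (nhds L) ∧
      ((∀ t : ℝ, 0 < t → IntegrableOn (fun x => Real.exp (-t * x) * Ψ x ^ p) (Ioi 1)) ↔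
        ((∀ t : ℝ, 0 < t → ∫⁻ x, ENNReal.ofReal (x ^ (-p)) ∂(μ t) ≠ ⊤) ∧
          IsCompletelyMonotoneFn
            (fun t => t * (∫⁻ x, ENNReal.ofReal (x ^ (-p)) ∂(μ t)).toReal))) ∧
      ((∀ t : ℝ, 0 < t → IntegrableOn (fun x => Real.exp (-t * x) * Ψ x ^ p) (Ioi 1)) →
        ∀ t : ℝ, 0 < t →
          t * (∫⁻ x, ENNReal.ofReal (x ^ (-p)) ∂(μ t)).toReal =
            (1 / Real.Gamma (p + 1)) *
              (L + ∫ x in Ioi (0 : ℝ),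
                Real.exp (-t * x) * deriv (deriv (fun y => Ψ y ^ p)) x)) := by
  have hp0 : 0 < p := by linarith
  have hφlim : Tendsto φ (nhdsWithin 0 (Ioi 0)) (nhds 0) := by
    have := hprob 1 one_pos
    have h1 := ((tendsto_laplace_one (μ 1) (hsupp 1 one_pos)).log one_ne_zero).neg
    rw [Real.log_one, neg_zero] at h1
    refine h1.congr' ?_
    filter_upwards [self_mem_nhdsWithin] with l hl
    rw [hlaplace 1 one_pos l (le_of_lt hl), Real.log_exp]
    ring
  have h : IsPosInverse φ Ψ := hφ.isPosInverse h0 hφlim hinf hinv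
  have hmono := h.monotoneOn_deriv_rpow hφ hp
  have hΓ : 0 < Real.Gamma (p + 1) := Real.Gamma_pos_of_pos (by linarith)
  have hbdd : 0 ∈ lowerBounds (deriv (fun y => Ψ y ^ p) '' Ioi 0) := by
    rintro _ ⟨x, hx, rfl⟩
    exact h.deriv_rpow_nonneg hφ hp0.le hx
  refine ⟨MonotoneOn.convexOn_of_deriv (convex_Ioi 0)
    (fun x hx => (h.hasDerivAt_rpow hφ p hx).continuousAt.continuousWithinAt)
    (fun x hx => (h.hasDerivAt_rpow hφ p
      (interior_subset hx)).differentiableAt.differentiableWithinAt)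
    (hmono.mono interior_subset), sInf (deriv (fun y => Ψ y ^ p) '' Ioi 0),
    Real.sInf_nonneg hbdd, hmono.tendsto_nhdsGT ⟨0, hbdd⟩, ?_⟩
  have hL := Real.sInf_nonneg hbdd
  have hLlim := hmono.tendsto_nhdsGT ⟨0, hbdd⟩
  generalize sInf (deriv (fun y => Ψ y ^ p) '' Ioi 0) = L at hL hLlim
  have hmoment : ∀ t : ℝ, 0 < t →
      ENNReal.ofReal (Real.Gamma (p + 1)) * ∫⁻ x, ENNReal.ofReal (x ^ (-p)) ∂(μ t) =
        ∫⁻ x in Ioi (0 : ℝ), ENNReal.ofReal (Real.exp (-t * x)) *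
          ENNReal.ofReal (deriv (fun y => Ψ y ^ p) x) := by
    intro t ht
    have := hprob t ht
    rw [Real.Gamma_add_one hp0.ne', ENNReal.ofReal_mul hp0.le, mul_assoc,
      Gamma_mul_lintegral_rpow_neg (μ t) (hsupp t ht) hp0, ← h.lintegral_rpow_exp hφ hp0]
    congr 1
    exact setLIntegral_congr_fun measurableSet_Ioi fun l hl => by
      rw [hlaplace t ht l (le_of_lt hl)]
  have hfin : ∀ t : ℝ, 0 < t →
      (IntegrableOn (fun x => Real.exp (-t * x) * Ψ x ^ p) (Ioi 1) ↔
        ∫⁻ x, ENNReal.ofReal (x ^ (-p)) ∂(μ t) ≠ ⊤) := by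
    intro t ht
    rw [h.integrableOn_exp_mul_rpow_iff hφ hp0 ht, ← hmoment t ht, ne_eq, ne_eq,
      ENNReal.mul_eq_top]
    simp [hΓ]
  have hkey : ∀ t : ℝ, 0 < t →
      ENNReal.ofReal t * ∫⁻ x, ENNReal.ofReal (x ^ (-p)) ∂(μ t) =
        ENNReal.ofReal (1 / Real.Gamma (p + 1)) * (ENNReal.ofReal L +
          ∫⁻ x in Ioi (0 : ℝ), ENNReal.ofReal (Real.exp (-t * x)) *
            ENNReal.ofReal (deriv (deriv fun y => Ψ y ^ p) x)) := by
    intro t ht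
    rw [← lintegral_exp_mul_eq_add_lintegral_exp_deriv ht
      (fun x hx => h.differentiableAt_deriv_rpow hφ p hx)
      (fun x hx => h.deriv_deriv_rpow_nonneg hφ hp hx) hL hLlim]
    simp only [ENNReal.ofReal_mul ht.le, mul_assoc]
    rw [lintegral_const_mul' _ _ ENNReal.ofReal_ne_top, ← hmoment t ht,
      mul_left_comm (ENNReal.ofReal t), ← mul_assoc, ← ENNReal.ofReal_mul (by positivity),
      one_div_mul_cancel hΓ.ne', ENNReal.ofReal_one, one_mul]
  have hmeas : Measurable fun x => ENNReal.ofReal (deriv (deriv fun y => Ψ y ^ p) x) :=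
    (measurable_deriv _).ennreal_ofReal
  refine ⟨⟨fun hi => ⟨fun t ht => (hfin t ht).1 (hi t ht), ?_⟩,
    fun hii t ht => (hfin t ht).2 (hii.1 t ht)⟩, fun hi t ht => ?_⟩
  · let ν : Measure ℝ := ENNReal.ofReal (1 / Real.Gamma (p + 1)) •
      (ENNReal.ofReal L • Measure.dirac 0 + (volume.restrict (Ioi 0)).withDensity
        fun x => ENNReal.ofReal (deriv (deriv fun y => Ψ y ^ p) x))
    have hν : ∀ t : ℝ, 0 < t → ∫⁻ x, ENNReal.ofReal (Real.exp (-t * x)) ∂ν =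
        ENNReal.ofReal t * ∫⁻ x, ENNReal.ofReal (x ^ (-p)) ∂(μ t) := by
      intro t ht
      rw [hkey t ht, lintegral_smul_measure, lintegral_add_measure, lintegral_smul_measure,
        lintegral_dirac, lintegral_withDensity_eq_lintegral_mul _ hmeas (by fun_prop)]
      simp [mul_comm]
    have hν0 : ∀ᵐ x ∂ν, 0 ≤ x := by
      refine Measure.ae_smul_measure (ae_add_measure_iff.2 ⟨Measure.ae_smul_measure ?_ _, ?_⟩) _
      · simp [ae_dirac_eq]
      · refine (withDensity_absolutelyContinuous _ _).ae_le ?_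
        exact (ae_restrict_iff' measurableSet_Ioi).2 (.of_forall fun x hx => le_of_lt hx)
    refine (isCompletelyMonotoneFn_laplace ν hν0 fun t ht => ?_).congr fun t ht => ?_
    · rw [hν t ht]
      exact ENNReal.mul_ne_top ENNReal.ofReal_ne_top ((hfin t ht).1 (hi t ht))
    · simp only [hν t ht, ENNReal.toReal_mul, ENNReal.toReal_ofReal (le_of_lt (mem_Ioi.1 ht))]
  · have hne : ∫⁻ x in Ioi (0 : ℝ), ENNReal.ofReal (Real.exp (-t * x)) *
        ENNReal.ofReal (deriv (deriv fun y => Ψ y ^ p) x) ≠ ⊤ := by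
      intro htop
      refine ENNReal.mul_ne_top (ENNReal.ofReal_ne_top (r := t)) ((hfin t ht).1 (hi t ht)) ?_
      rw [hkey t ht, htop, add_top, ENNReal.mul_top]
      simpa using hΓ
    have hnn : 0 ≤ᵐ[volume.restrict (Ioi 0)] fun x =>
        Real.exp (-t * x) * deriv (deriv fun y => Ψ y ^ p) x :=
      (ae_restrict_iff' measurableSet_Ioi).2 (.of_forall fun x hx =>
        mul_nonneg (Real.exp_pos _).le (h.deriv_deriv_rpow_nonneg hφ hp hx))
    have htoReal := congrArg ENNReal.toReal (hkey t ht)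
    rw [ENNReal.toReal_mul, ENNReal.toReal_mul, ENNReal.toReal_ofReal ht.le,
      ENNReal.toReal_ofReal (by positivity), ENNReal.toReal_add ENNReal.ofReal_ne_top hne,
      ENNReal.toReal_ofReal hL] at htoReal
    rw [htoReal, integral_eq_lintegral_of_nonneg_ae hnn
      ((by fun_prop : Measurable fun x => Real.exp (-t * x)).mul
        (measurable_deriv _)).aestronglyMeasurable]
    simp only [ENNReal.ofReal_mul (Real.exp_pos _).le]
end

section
/- Let φ be a non-trivial (non-affine) Bernstein function with φ(0) = 0 and φ(∞) = ∞, let Ψ be its inverse, let (μ_t)_{t>0} be the family of marginal laws of the subordinator associated with φ, and let p ≥ 1. Assume further that Ψ^p ∈ Lle(0,∞) with quadruple (0, β_p, γ_p, ν_p). Then (Ψ^p)'(0+) = β_p − ∫_{(0,∞)} x³/(1+x²) ν_p(dx) belongs to [0,∞), and for every t > 0, t·E[ξ_t^{−p}] = t·∫ x^{−p} μ_t(dx) = (1/Γ(p+1)) [ (Ψ^p)'(0+) + γ_p²/t + ∫_{(0,∞)} u²/(t+u) ν_p(du) ]; in particular t ↦ t·E[ξ_t^{−p}] is a Stieltjes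 transform. -/
open MeasureTheory Set Filter

/-- A Stieltjes transform on `(0,∞)`:
`f(λ) = d + q/λ + ∫_{(0,∞)} (λ+u)⁻¹ Δ(du)` with `d, q ≥ 0` and `Δ` a Borel measure on
`(0,∞)` integrating `(1+u)⁻¹`. -/
def IsStieltjesFn (f : ℝ → ℝ) : Prop :=
  ∃ d q : ℝ, 0 ≤ d ∧ 0 ≤ q ∧ ∃ Δ : Measure ℝ, Δ {x | x ≤ 0} = 0 ∧
    (∫⁻ u, ENNReal.ofReal ((1 + u)⁻¹) ∂Δ) < ⊤ ∧
    ∀ l : ℝ, 0 < l → f l = d + q / l + ∫ u, (l + u)⁻¹ ∂Δ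

section LevyMeasure

variable {ν : Measure ℝ}

theorem ae_pos_of_measure_nonpos_eq_zero (h : ν {x | x ≤ 0} = 0) : ∀ᵐ x ∂ν, 0 < x := by
  rw [ae_iff]
  simpa using h

theorem sFinite_of_lintegral_min_sq_one (hpos : ∀ᵐ x ∂ν, 0 < x)
    (hfin_int : (∫⁻ x, ENNReal.ofReal (min (x ^ 2) 1) ∂ν) < ⊤) : SFinite ν := by
  have hfin : IsFiniteMeasure (ν.withDensity fun x => ENNReal.ofReal (min (x ^ 2) 1)) :=
    isFiniteMeasure_withDensity hfin_int.ne
  refine sFinite_of_absolutelyContinuous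
    (ν := ν.withDensity fun x => ENNReal.ofReal (min (x ^ 2) 1)) ?_
  refine withDensity_absolutelyContinuous' (by fun_prop) ?_
  filter_upwards [hpos] with x hx
  simp only [ne_eq, ENNReal.ofReal_eq_zero, not_le]
  positivity

theorem integrable_min_sq_one (hfin_int : (∫⁻ x, ENNReal.ofReal (min (x ^ 2) 1) ∂ν) < ⊤) :
    Integrable (fun x => min (x ^ 2) 1) ν := by
  refine ⟨by fun_prop, ?_⟩
  rw [hasFiniteIntegral_iff_ofReal (ae_of_all _ fun x => by positivity)]
  exact hfin_int

theorem exp_neg_sub_one_add_nonneg (s : ℝ) : 0 ≤ Real.exp (-s) - 1 + s := by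
  linarith [Real.add_one_le_exp (-s)]

theorem exp_neg_sub_one_add_le {s : ℝ} (hs : 0 ≤ s) :
    Real.exp (-s) - 1 + s ≤ s ∧ Real.exp (-s) - 1 + s ≤ s ^ 2 := by
  have h1 : Real.exp (-s) ≤ (1 + s)⁻¹ := by
    rw [Real.exp_neg]
    exact inv_anti₀ (by linarith) (by linarith [Real.add_one_le_exp s])
  have h2 : (1 + s)⁻¹ - 1 + s = s ^ 2 / (1 + s) := by field_simp; ring
  have h3 : s ^ 2 / (1 + s) ≤ s ^ 2 := div_le_self (by positivity) (by linarith)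
  have h4 : Real.exp (-s) ≤ 1 := by simpa using hs
  constructor <;> linarith

theorem abs_compensated_exp_le {l x : ℝ} (hl : 0 ≤ l) (hx : 0 < x) :
    |Real.exp (-l * x) - 1 + l * x / (1 + x ^ 2)| ≤ (1 + l) ^ 2 * min (x ^ 2) 1 := by
  have hs : 0 ≤ l * x := by positivity
  have hk := exp_neg_sub_one_add_nonneg (l * x)
  obtain ⟨-, hk2⟩ := exp_neg_sub_one_add_le hs
  have he1 : Real.exp (-(l * x)) ≤ 1 := by simpa using hs
  have he0 := Real.exp_pos (-(l * x))
  rw [neg_mul]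
  rcases le_total x 1 with h | h
  · rw [min_eq_left (by nlinarith)]
    have h1 : l * x / (1 + x ^ 2) = l * x - l * x ^ 3 / (1 + x ^ 2) := by field_simp; ring
    have h2 : l * x ^ 3 / (1 + x ^ 2) ≤ l * x ^ 2 := by
      rw [div_le_iff₀ (by positivity)]
      have : x ^ 3 ≤ x ^ 2 * (1 + x ^ 2) := by nlinarith [sq_nonneg x, sq_nonneg (x ^ 2)]
      nlinarith
    have h3 : 0 ≤ l * x ^ 3 / (1 + x ^ 2) := by positivity
    rw [abs_le]
    constructor <;> nlinarith [mul_nonneg hl (sq_nonneg x), sq_nonneg x, sq_nonneg (l * x)]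
  · rw [min_eq_right (by nlinarith)]
    have h1 : l * x / (1 + x ^ 2) ≤ l := by
      rw [div_le_iff₀ (by positivity)]
      nlinarith [mul_nonneg hl (sq_nonneg (x - 1)), mul_nonneg hl hx.le]
    have h2 : 0 ≤ l * x / (1 + x ^ 2) := by positivity
    rw [abs_le]
    constructor <;> nlinarith

theorem integrable_compensated_exp (hpos : ∀ᵐ x ∂ν, 0 < x)
    (hfin_int : (∫⁻ x, ENNReal.ofReal (min (x ^ 2) 1) ∂ν) < ⊤) {l : ℝ} (hl : 0 ≤ l) :
    Integrable (fun x => Real.exp (-l * x) - 1 + l * x / (1 + x ^ 2)) ν := by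
  refine ((integrable_min_sq_one hfin_int).const_mul ((1 + l) ^ 2)).mono' (by fun_prop) ?_
  filter_upwards [hpos] with x hx
  exact abs_compensated_exp_le hl hx

theorem div_one_sub_exp_neg_le {l x : ℝ} (hl : 0 < l) (hl1 : l ≤ 1) :
    1 - Real.exp (-x) ≤ (1 - Real.exp (-l * x)) / l := by
  rw [le_div_iff₀ hl]
  have h := convexOn_exp.2 (mem_univ (-x)) (mem_univ 0) hl.le (sub_nonneg.2 hl1) (by ring)
  simp only [smul_eq_mul, mul_zero, add_zero, Real.exp_zero, mul_one] at h
  rw [show l * -x = -l * x by ring] at h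
  linarith

theorem tendsto_div_one_sub_exp_neg (x : ℝ) :
    Tendsto (fun l : ℝ => (1 - Real.exp (-l * x)) / l) (nhdsWithin 0 (Ioi 0)) (nhds x) := by
  have h : HasDerivAt (fun l : ℝ => 1 - Real.exp (-l * x)) x 0 := by
    have h1 := (((hasDerivAt_id (0 : ℝ)).neg.mul_const x).exp).const_sub 1
    simpa using h1
  have h2 := (hasDerivAt_iff_tendsto_slope.1 h).mono_left
    (nhdsWithin_mono 0 (show Ioi (0 : ℝ) ⊆ {0}ᶜ from fun y hy => ne_of_gt hy))
  refine h2.congr fun l => ?_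
  simp [slope_def_field]

/-- If the Laplace exponent with characteristics `(β, γ, ν)` is nonnegative, then `ν` integrates
`x³/(1+x²)` and the drift at zero is nonnegative. -/
theorem integrable_and_integral_le_of_exponent_nonneg (hpos : ∀ᵐ x ∂ν, 0 < x)
    (hfin_int : (∫⁻ x, ENNReal.ofReal (min (x ^ 2) 1) ∂ν) < ⊤) {β γ : ℝ}
    (hnonneg : ∀ l : ℝ, 0 ≤ l → 0 ≤ β * l + γ ^ 2 / 2 * l ^ 2 +
        ∫ x, (Real.exp (-l * x) - 1 + l * x / (1 + x ^ 2)) ∂ν) :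
    Integrable (fun x => x ^ 3 / (1 + x ^ 2)) ν ∧ ∫ x, x ^ 3 / (1 + x ^ 2) ∂ν ≤ β := by
  set J : ℝ → ℝ := fun l => ∫ x, (Real.exp (-l * x) - 1 + l * x / (1 + x ^ 2)) ∂ν with hJ
  have hI := fun {l : ℝ} (hl : 0 ≤ l) => integrable_compensated_exp hpos hfin_int hl
  let a : ℝ → ℝ → ℝ := fun l x => (1 - Real.exp (-l * x)) / l - (1 - Real.exp (-x))
  have ha_eq : ∀ {l : ℝ}, 0 < l → a l = fun x =>
      (-l⁻¹) * (Real.exp (-l * x) - 1 + l * x / (1 + x ^ 2)) +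
        (Real.exp (-1 * x) - 1 + 1 * x / (1 + x ^ 2)) := by
    intro l hl
    funext x
    simp only [a]
    have : Real.exp (-1 * x) = Real.exp (-x) := by ring_nf
    rw [this]
    field_simp
    ring
  have ha_int : ∀ {l : ℝ}, 0 < l → Integrable (a l) ν := by
    intro l hl
    rw [ha_eq hl]
    exact ((hI hl.le).const_mul _).add (hI zero_le_one)
  have ha_val : ∀ {l : ℝ}, 0 < l → ∫ x, a l x ∂ν = (-l⁻¹) * J l + J 1 := by
    intro l hl
    rw [ha_eq hl, integral_add ((hI hl.le).const_mul _) (hI zero_le_one), integral_const_mul]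
  have ha_le : ∀ {l : ℝ}, 0 < l → ∫ x, a l x ∂ν ≤ β + γ ^ 2 / 2 * l + J 1 := by
    intro l hl
    rw [ha_val hl]
    have h := hnonneg l hl.le
    have : (-l⁻¹) * J l ≤ β + γ ^ 2 / 2 * l := by
      rw [neg_mul, neg_le_iff_add_nonneg]
      have h2 := mul_nonneg (inv_nonneg.2 hl.le) h
      calc (0 : ℝ) ≤ _ := h2
        _ = _ := by simp only [hJ]; field_simp
    linarith
  have ha_nonneg : ∀ {l : ℝ}, 0 < l → l ≤ 1 → ∀ x, 0 ≤ a l x := fun hl hl1 x =>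
    sub_nonneg.2 (div_one_sub_exp_neg_le hl hl1)
  have hev : ∀ᶠ l : ℝ in nhdsWithin 0 (Ioi 0), 0 < l ∧ l ≤ 1 := by
    filter_upwards [Ioc_mem_nhdsGT (zero_lt_one' ℝ)] with l hl using hl
  have hlim : Tendsto (fun l : ℝ => β + γ ^ 2 / 2 * l + J 1) (nhdsWithin 0 (Ioi 0))
      (nhds (β + J 1)) := by
    have : Continuous (fun l : ℝ => β + γ ^ 2 / 2 * l + J 1) := by fun_prop
    simpa using (this.tendsto 0).mono_left nhdsWithin_le_nhds
  have hβJ : 0 ≤ β + J 1 := by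
    refine ge_of_tendsto hlim ?_
    filter_upwards [hev] with l hl
    exact (integral_nonneg (ha_nonneg hl.1 hl.2)).trans (ha_le hl.1)
  have hfatou : ∫⁻ x, ENNReal.ofReal (Real.exp (-x) - 1 + x) ∂ν ≤ ENNReal.ofReal (β + J 1) := by
    calc ∫⁻ x, ENNReal.ofReal (Real.exp (-x) - 1 + x) ∂ν
        = ∫⁻ x, liminf (fun l => ENNReal.ofReal (a l x)) (nhdsWithin 0 (Ioi 0)) ∂ν := by
          refine lintegral_congr fun x => ?_
          refine (Tendsto.liminf_eq ?_).symm
          refine ENNReal.tendsto_ofReal ?_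
          have := (tendsto_div_one_sub_exp_neg x).sub_const (1 - Real.exp (-x))
          convert this using 2
          ring
      _ ≤ liminf (fun l => ∫⁻ x, ENNReal.ofReal (a l x) ∂ν) (nhdsWithin 0 (Ioi 0)) :=
          lintegral_liminf_le fun l => by fun_prop
      _ ≤ liminf (fun l => ENNReal.ofReal (β + γ ^ 2 / 2 * l + J 1)) (nhdsWithin 0 (Ioi 0)) := by
          refine liminf_le_liminf ?_
          filter_upwards [hev] with l hl
          rw [← ofReal_integral_eq_lintegral_ofReal (ha_int hl.1)
            (ae_of_all _ (ha_nonneg hl.1 hl.2))]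
          exact ENNReal.ofReal_le_ofReal (ha_le hl.1)
      _ = ENNReal.ofReal (β + J 1) := (ENNReal.tendsto_ofReal hlim).liminf_eq
  have hk_int : Integrable (fun x => Real.exp (-x) - 1 + x) ν := by
    refine ⟨by fun_prop, ?_⟩
    rw [hasFiniteIntegral_iff_ofReal (ae_of_all _ exp_neg_sub_one_add_nonneg)]
    exact hfatou.trans_lt ENNReal.ofReal_lt_top
  have hk_le : ∫ x, (Real.exp (-x) - 1 + x) ∂ν ≤ β + J 1 := by
    rwa [← ENNReal.ofReal_le_ofReal_iff hβJ,
      ofReal_integral_eq_lintegral_ofReal hk_int (ae_of_all _ exp_neg_sub_one_add_nonneg)]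
  have hsplit : (fun x : ℝ => x ^ 3 / (1 + x ^ 2)) = fun x => (Real.exp (-x) - 1 + x) -
      (Real.exp (-1 * x) - 1 + 1 * x / (1 + x ^ 2)) := by
    funext x
    rw [neg_one_mul]
    field_simp
    ring
  rw [hsplit]
  refine ⟨hk_int.sub (hI zero_le_one), ?_⟩
  rw [integral_sub hk_int (hI zero_le_one)]
  linarith

theorem integrable_mul_min_one (hpos : ∀ᵐ x ∂ν, 0 < x)
    (hfin_int : (∫⁻ x, ENNReal.ofReal (min (x ^ 2) 1) ∂ν) < ⊤)
    (h3 : Integrable (fun x => x ^ 3 / (1 + x ^ 2)) ν) :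
    Integrable (fun x => x * min x 1) ν := by
  refine ((integrable_min_sq_one hfin_int).add (h3.const_mul 2)).mono' (by fun_prop) ?_
  filter_upwards [hpos] with x hx
  rw [Real.norm_of_nonneg (by positivity), Pi.add_apply]
  rcases le_total x 1 with h | h
  · rw [min_eq_left h, min_eq_left (by nlinarith)]
    have : 0 ≤ 2 * (x ^ 3 / (1 + x ^ 2)) := by positivity
    nlinarith
  · rw [min_eq_right h]
    have h1 : x ≤ 2 * (x ^ 3 / (1 + x ^ 2)) := by
      rw [← mul_div_assoc, le_div_iff₀ (by positivity)]
      have : 0 ≤ x * (x ^ 2 - 1) := mul_nonneg hx.le (by nlinarith)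
      nlinarith
    have : 0 ≤ min (x ^ 2) 1 := by positivity
    linarith

theorem integrable_exp_sub_one_add (hpos : ∀ᵐ x ∂ν, 0 < x)
    (hm : Integrable (fun x => x * min x 1) ν) {y : ℝ} (hy : 0 ≤ y) :
    Integrable (fun x => Real.exp (-(y * x)) - 1 + y * x) ν := by
  refine (hm.const_mul ((1 + y) ^ 2)).mono' (by fun_prop) ?_
  filter_upwards [hpos] with x hx
  rw [Real.norm_of_nonneg (exp_neg_sub_one_add_nonneg _)]
  obtain ⟨h1, h2⟩ := exp_neg_sub_one_add_le (mul_nonneg hy hx.le)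
  rcases le_total x 1 with h | h
  · rw [min_eq_left h]
    nlinarith [mul_nonneg hy (sq_nonneg x), sq_nonneg x]
  · rw [min_eq_right h]
    nlinarith [mul_nonneg hy hx.le, mul_nonneg (sq_nonneg y) hx.le]

theorem integrable_sq_div_add (hpos : ∀ᵐ x ∂ν, 0 < x)
    (hm : Integrable (fun x => x * min x 1) ν) {t : ℝ} (ht : 0 < t) :
    Integrable (fun u => u ^ 2 / (t + u)) ν := by
  refine (hm.const_mul (1 + t⁻¹)).mono'
    (show Measurable fun u : ℝ => u ^ 2 / (t + u) by fun_prop).aestronglyMeasurable ?_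
  filter_upwards [hpos] with x hx
  rw [Real.norm_of_nonneg (by positivity), div_le_iff₀ (by positivity)]
  have hid : (1 + t⁻¹) * (x * min x 1) * (t + x) = (t + 1 + x + x * t⁻¹) * (x * min x 1) := by
    field_simp
    ring
  rw [hid]
  have hxt : 0 ≤ x * t⁻¹ := by positivity
  rcases le_total x 1 with h | h
  · rw [min_eq_left h]
    nlinarith [mul_nonneg hxt (sq_nonneg x), mul_nonneg hx.le (sq_nonneg x),
      mul_nonneg ht.le (sq_nonneg x)]
  · rw [min_eq_right h]
    nlinarith [mul_nonneg hxt hx.le, mul_nonneg ht.le hx.le]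

theorem norm_mul_one_sub_exp_le {K x y : ℝ} (hK : 0 ≤ K) (hx : 0 < x) (hy : 0 ≤ y) (hyK : y ≤ K) :
    ‖x * (1 - Real.exp (-(y * x)))‖ ≤ (1 + K) * (x * min x 1) := by
  have hs : 0 ≤ y * x := by positivity
  have he1 : Real.exp (-(y * x)) ≤ 1 := by simpa using hs
  have he0 := Real.exp_pos (-(y * x))
  have hk := exp_neg_sub_one_add_nonneg (y * x)
  rw [Real.norm_of_nonneg (mul_nonneg hx.le (by linarith)), mul_left_comm]
  refine mul_le_mul_of_nonneg_left ?_ hx.le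
  rcases le_total x 1 with h | h
  · rw [min_eq_left h]
    nlinarith
  · rw [min_eq_right h]
    linarith

theorem hasDerivAt_integral_exp_sub_one_add (hpos : ∀ᵐ x ∂ν, 0 < x)
    (hm : Integrable (fun x => x * min x 1) ν) {y : ℝ} (hy : 0 < y) :
    HasDerivAt (fun y => ∫ x, (Real.exp (-(y * x)) - 1 + y * x) ∂ν)
      (∫ x, x * (1 - Real.exp (-(y * x))) ∂ν) y := by
  refine (hasDerivAt_integral_of_dominated_loc_of_deriv_le
    (F' := fun y x => x * (1 - Real.exp (-(y * x))))
    (bound := fun x => (1 + (y + 1)) * (x * min x 1))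
    (Ioo_mem_nhds hy (lt_add_one y)) (Eventually.of_forall fun z => by fun_prop)
    (integrable_exp_sub_one_add hpos hm hy.le) (by fun_prop) ?_ (hm.const_mul _) ?_).2
  · filter_upwards [hpos] with x hx z hz
    exact norm_mul_one_sub_exp_le (by linarith) hx hz.1.le hz.2.le
  · refine ae_of_all _ fun x z _ => ?_
    have h := ((((hasDerivAt_id z).mul_const x).neg.exp).sub_const 1).add
      ((hasDerivAt_id z).mul_const x)
    refine h.congr_deriv ?_
    simp
    ring

theorem tendsto_integral_mul_one_sub_exp (hpos : ∀ᵐ x ∂ν, 0 < x)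
    (hm : Integrable (fun x => x * min x 1) ν) :
    Tendsto (fun y => ∫ x, x * (1 - Real.exp (-(y * x))) ∂ν) (nhdsWithin 0 (Ioi 0)) (nhds 0) := by
  have h := tendsto_integral_filter_of_dominated_convergence (μ := ν)
    (F := fun y x => x * (1 - Real.exp (-(y * x)))) (f := fun _ => (0 : ℝ))
    (l := nhdsWithin 0 (Ioi 0)) (fun x => (1 + 1) * (x * min x 1))
    (Eventually.of_forall fun z => by fun_prop) ?_ (hm.const_mul _) ?_
  · simpa using h
  · filter_upwards [Ioc_mem_nhdsGT (zero_lt_one' ℝ)] with y hy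
    filter_upwards [hpos] with x hx
    exact norm_mul_one_sub_exp_le zero_le_one hx hy.1.le hy.2
  · refine ae_of_all _ fun x => ?_
    have : Continuous fun y : ℝ => x * (1 - Real.exp (-(y * x))) := by fun_prop
    simpa using (this.tendsto 0).mono_left nhdsWithin_le_nhds

/-- The exponent written with full first-order compensation. -/
theorem integral_compensated_exp_eq (hpos : ∀ᵐ x ∂ν, 0 < x)
    (h3 : Integrable (fun x => x ^ 3 / (1 + x ^ 2)) ν)
    (hm : Integrable (fun x => x * min x 1) ν) {l : ℝ} (hl : 0 ≤ l) :
    ∫ x, (Real.exp (-l * x) - 1 + l * x / (1 + x ^ 2)) ∂ν =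
      ∫ x, (Real.exp (-(l * x)) - 1 + l * x) ∂ν - l * ∫ x, x ^ 3 / (1 + x ^ 2) ∂ν := by
  rw [← integral_const_mul, ← integral_sub (integrable_exp_sub_one_add hpos hm hl) (h3.const_mul l)]
  refine integral_congr_ae (ae_of_all _ fun x => ?_)
  simp only [neg_mul]
  field_simp
  ring

end LevyMeasure

section Laplace

theorem integral_pow_mul_exp_neg_mul (n : ℕ) {t : ℝ} (ht : 0 < t) :
    IntegrableOn (fun y : ℝ => y ^ n * Real.exp (-(t * y))) (Ioi 0) ∧
      ∫ y in Ioi (0 : ℝ), y ^ n * Real.exp (-(t * y)) = n.factorial / t ^ (n + 1) := by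
  have hn : (-1 : ℝ) < n := by linarith [Nat.cast_nonneg (α := ℝ) n]
  constructor
  · have h := integrableOn_rpow_mul_exp_neg_mul_rpow hn zero_lt_one ht
    simpa using h
  · have h := Real.integral_rpow_mul_exp_neg_mul_Ioi (a := n + 1) (by linarith) ht
    have h2 : ((1 / t) ^ ((n : ℝ) + 1)) = 1 / t ^ (n + 1) := by
      rw [show ((n : ℝ) + 1) = ((n + 1 : ℕ) : ℝ) by push_cast; ring, Real.rpow_natCast]
      simp
    rw [h2, Real.Gamma_nat_eq_factorial] at h
    simp only [add_sub_cancel_right, Real.rpow_natCast] at h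
    rw [h]
    ring

/-- Laplace transform of `y ↦ a y + b y²`. -/
theorem lintegral_exp_mul_quadratic {a b t : ℝ} (ha : 0 ≤ a) (hb : 0 ≤ b) (ht : 0 < t) :
    ∫⁻ y in Ioi (0 : ℝ), ENNReal.ofReal (t * Real.exp (-(t * y)) * (a * y + b * y ^ 2)) =
      ENNReal.ofReal (a / t + 2 * b / t ^ 2) := by
  obtain ⟨h1, e1⟩ := integral_pow_mul_exp_neg_mul 1 ht
  obtain ⟨h2, e2⟩ := integral_pow_mul_exp_neg_mul 2 ht
  have heq : (fun y : ℝ => t * Real.exp (-(t * y)) * (a * y + b * y ^ 2)) = fun y =>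
      (t * a) * (y ^ 1 * Real.exp (-(t * y))) + (t * b) * (y ^ 2 * Real.exp (-(t * y))) := by
    funext y
    ring
  have hfin_int : IntegrableOn (fun y : ℝ => t * Real.exp (-(t * y)) * (a * y + b * y ^ 2))
      (Ioi 0) := by
    rw [heq]
    exact (h1.const_mul _).add (h2.const_mul _)
  rw [← ofReal_integral_eq_lintegral_ofReal hfin_int]
  · rw [heq, integral_add (h1.const_mul _) (h2.const_mul _), integral_const_mul,
      integral_const_mul, e1, e2]
    congr 1
    simp only [Nat.factorial]
    field_simp
    push_cast
    ring
  · filter_upwards [ae_restrict_mem measurableSet_Ioi] with y hy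
    have hy' : (0 : ℝ) < y := hy
    simp only [Pi.zero_apply]
    positivity

/-- Laplace transform of `y ↦ exp (-(y x)) - 1 + y x`. -/
theorem lintegral_exp_mul_exp_sub_one_add {t x : ℝ} (ht : 0 < t) (hx : 0 < x) :
    ∫⁻ y in Ioi (0 : ℝ), ENNReal.ofReal
        (t * Real.exp (-(t * y)) * (Real.exp (-(y * x)) - 1 + y * x)) =
      ENNReal.ofReal (t⁻¹ * (x ^ 2 / (t + x))) := by
  obtain ⟨h0, e0⟩ := integral_pow_mul_exp_neg_mul 0 ht
  obtain ⟨h1, e1⟩ := integral_pow_mul_exp_neg_mul 1 ht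
  obtain ⟨h2, e2⟩ := integral_pow_mul_exp_neg_mul 0 (add_pos ht hx)
  have heq : (fun y : ℝ => t * Real.exp (-(t * y)) * (Real.exp (-(y * x)) - 1 + y * x)) = fun y =>
      (t * (y ^ 0 * Real.exp (-((t + x) * y))) - t * (y ^ 0 * Real.exp (-(t * y)))) +
        (t * x) * (y ^ 1 * Real.exp (-(t * y))) := by
    funext y
    rw [show -((t + x) * y) = -(t * y) + -(y * x) by ring, Real.exp_add]
    ring
  have hfin_int : IntegrableOn
      (fun y : ℝ => t * Real.exp (-(t * y)) * (Real.exp (-(y * x)) - 1 + y * x)) (Ioi 0) := by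
    rw [heq]
    exact ((h2.const_mul _).sub (h0.const_mul _)).add (h1.const_mul _)
  rw [← ofReal_integral_eq_lintegral_ofReal hfin_int]
  · have hsub : IntegrableOn (fun y : ℝ => t * (y ^ 0 * Real.exp (-((t + x) * y))) -
        t * (y ^ 0 * Real.exp (-(t * y)))) (Ioi 0) := (h2.const_mul _).sub (h0.const_mul _)
    rw [heq, integral_add hsub (h1.const_mul _),
      integral_sub (h2.const_mul _) (h0.const_mul _), integral_const_mul,
      integral_const_mul, integral_const_mul, e0, e1, e2]
    congr 1
    simp only [Nat.factorial]
    have : t + x ≠ 0 := by positivity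
    field_simp
    push_cast
    ring
  · exact ae_of_all _ fun y => mul_nonneg (by positivity) (exp_neg_sub_one_add_nonneg _)

theorem lintegral_rpow_mul_exp_neg_mul {p x : ℝ} (hp : 0 < p) (hx : 0 < x) :
    ∫⁻ l in Ioi (0 : ℝ), ENNReal.ofReal (p * l ^ (p - 1)) * ENNReal.ofReal (Real.exp (-l * x)) =
      ENNReal.ofReal (Real.Gamma (p + 1)) * ENNReal.ofReal (x ^ (-p)) := by
  have h := Real.integral_rpow_mul_exp_neg_mul_Ioi hp hx
  have hi : IntegrableOn (fun l : ℝ => l ^ (p - 1) * Real.exp (-(x * l))) (Ioi 0) := by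
    simpa using integrableOn_rpow_mul_exp_neg_mul_rpow (s := p - 1) (by linarith) zero_lt_one hx
  have hnn : ∀ᵐ l ∂(volume.restrict (Ioi (0 : ℝ))),
      0 ≤ p * (l ^ (p - 1) * Real.exp (-(x * l))) := by
    filter_upwards [ae_restrict_mem measurableSet_Ioi] with l hl
    have hl' : (0 : ℝ) < l := hl
    positivity
  rw [← ENNReal.ofReal_mul (Real.Gamma_pos_of_pos (by linarith)).le]
  have hval : Real.Gamma (p + 1) * x ^ (-p) =
      ∫ l in Ioi (0 : ℝ), p * (l ^ (p - 1) * Real.exp (-(x * l))) := by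
    rw [integral_const_mul, h, Real.Gamma_add_one hp.ne', one_div, Real.inv_rpow hx.le,
      Real.rpow_neg hx.le]
    ring
  rw [hval, ofReal_integral_eq_lintegral_ofReal (hi.const_mul p) hnn]
  refine setLIntegral_congr_fun measurableSet_Ioi fun l hl => ?_
  have hl' : (0 : ℝ) < l := hl
  rw [← ENNReal.ofReal_mul (by positivity)]
  ring_nf

theorem lintegral_Ioi_mul_exp {t : ℝ} (ht : 0 < t) (c : ℝ) :
    ∫⁻ y in Ioi c, ENNReal.ofReal (t * Real.exp (-(t * y))) = ENNReal.ofReal (Real.exp (-t * c)) := by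
  have hi : IntegrableOn (fun y => t * Real.exp (-(t * y))) (Ioi c) := by
    simpa [IntegrableOn] using (integrableOn_exp_mul_Ioi (neg_lt_zero.2 ht) c).const_mul t
  rw [← ofReal_integral_eq_lintegral_ofReal hi (ae_of_all _ fun y => by positivity)]
  have h := integral_exp_mul_Ioi (neg_lt_zero.2 ht) c
  simp only [neg_mul] at h
  rw [integral_const_mul, h]
  congr 1
  simp only [neg_mul]
  field_simp

theorem lintegral_Ioo_mul_rpow {p s : ℝ} (hp : 1 ≤ p) (hs : 0 ≤ s) :
    ∫⁻ l in Ioo 0 s, ENNReal.ofReal (p * l ^ (p - 1)) = ENNReal.ofReal (s ^ p) := by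
  have hi : IntervalIntegrable (fun l : ℝ => p * l ^ (p - 1)) volume 0 s :=
    (intervalIntegral.intervalIntegrable_rpow' (by linarith)).const_mul p
  have hnn : ∀ᵐ l ∂(volume.restrict (Ioc 0 s)), 0 ≤ p * l ^ (p - 1) := by
    filter_upwards [ae_restrict_mem measurableSet_Ioc] with l hl
    have hl' : (0 : ℝ) < l := hl.1
    positivity
  rw [setLIntegral_congr Ioo_ae_eq_Ioc, ← ofReal_integral_eq_lintegral_ofReal hi.1 hnn,
    ← intervalIntegral.integral_of_le hs, intervalIntegral.integral_const_mul,
    integral_rpow (Or.inl (by linarith))]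
  congr 1
  rw [sub_add_cancel, Real.zero_rpow (by linarith)]
  field_simp
  ring

end Laplace

section Subordinator

variable {φ Ψ : ℝ → ℝ}

theorem integrable_exp_neg_mul {m : Measure ℝ} [IsFiniteMeasure m] (hpos : ∀ᵐ x ∂m, 0 < x)
    {l : ℝ} (hl : 0 ≤ l) : Integrable (fun x => Real.exp (-l * x)) m := by
  refine (integrable_const (1 : ℝ)).mono' (by fun_prop) ?_
  filter_upwards [hpos] with x hx
  rw [Real.norm_of_nonneg (Real.exp_pos _).le, Real.exp_le_one_iff]
  nlinarith

theorem continuousOn_monotoneOn_of_laplace {m : Measure ℝ} [IsProbabilityMeasure m]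
    (hpos : ∀ᵐ x ∂m, 0 < x)
    (hlap : ∀ l : ℝ, 0 ≤ l → ∫ x, Real.exp (-l * x) ∂m = Real.exp (-φ l)) :
    ContinuousOn φ (Ici 0) ∧ MonotoneOn φ (Ici 0) := by
  have hlog : ∀ l ∈ Ici (0 : ℝ), φ l = -Real.log (∫ x, Real.exp (-l * x) ∂m) := by
    intro l hl
    rw [hlap l hl, Real.log_exp, neg_neg]
  constructor
  · refine ContinuousOn.congr ?_ hlog
    refine ContinuousOn.neg (ContinuousOn.log ?_ fun l hl => ?_)
    · refine continuousOn_of_dominated (bound := fun _ => 1) (fun l _ => by fun_prop) ?_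
        (integrable_const _) (ae_of_all _ fun x => by fun_prop)
      intro l hl
      filter_upwards [hpos] with x hx
      rw [Real.norm_of_nonneg (Real.exp_pos _).le, Real.exp_le_one_iff]
      have : (0 : ℝ) ≤ l := hl
      nlinarith
    · rw [hlap l hl]
      exact (Real.exp_pos _).ne'
  · intro a ha b hb hab
    have h : Real.exp (-φ b) ≤ Real.exp (-φ a) := by
      rw [← hlap a ha, ← hlap b hb]
      refine integral_mono_ae (integrable_exp_neg_mul hpos hb) (integrable_exp_neg_mul hpos ha) ?_
      filter_upwards [hpos] with x hx
      refine Real.exp_le_exp.2 ?_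
      nlinarith
    linarith [Real.exp_le_exp.1 h]

theorem inverse_nonneg_and_lt_iff (hcont : ContinuousOn φ (Ici 0)) (hmono : MonotoneOn φ (Ici 0))
    (h0 : φ 0 = 0) (hinf : Tendsto φ atTop atTop) (hinv : LeftInvOn Ψ φ (Ici 0)) {y : ℝ}
    (hy : 0 ≤ y) : 0 ≤ Ψ y ∧ ∀ l, 0 ≤ l → (l < Ψ y ↔ φ l < y) := by
  have hstrict : StrictMonoOn φ (Ici 0) := hmono.strictMonoOn_of_injOn hinv.injOn
  obtain ⟨b, hb, hyb⟩ := ((eventually_ge_atTop 0).and (hinf.eventually_ge_atTop y)).exists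
  obtain ⟨x, hx, rfl⟩ := intermediate_value_Icc hb (hcont.mono Icc_subset_Ici_self)
    (show y ∈ Icc (φ 0) (φ b) from ⟨h0.symm ▸ hy, hyb⟩)
  rw [hinv hx.1]
  exact ⟨hx.1, fun l hl => (hstrict.lt_iff_lt hl hx.1).symm⟩

/-- Negative moments of a subordinator as a Laplace transform of `Ψ ^ p`. -/
theorem gamma_mul_lintegral_rpow_neg_eq {m : Measure ℝ} [IsProbabilityMeasure m]
    (hpos : ∀ᵐ x ∂m, 0 < x) {t p : ℝ} (ht : 0 < t) (hp : 1 ≤ p)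
    (hlap : ∀ l : ℝ, 0 ≤ l → ∫ x, Real.exp (-l * x) ∂m = Real.exp (-t * φ l))
    (hmono : MonotoneOn φ (Ici 0)) (h0 : φ 0 = 0)
    (hΨ : ∀ y, 0 ≤ y → 0 ≤ Ψ y ∧ ∀ l, 0 ≤ l → (l < Ψ y ↔ φ l < y)) :
    ENNReal.ofReal (Real.Gamma (p + 1)) * ∫⁻ x, ENNReal.ofReal (x ^ (-p)) ∂m =
      ∫⁻ y in Ioi (0 : ℝ), ENNReal.ofReal (t * Real.exp (-(t * y))) * ENNReal.ofReal (Ψ y ^ p) := by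
  have hφmeas : Measurable fun l => φ (max l 0) := Monotone.measurable fun a b hab =>
    hmono (mem_Ici.2 (le_max_right _ _)) (mem_Ici.2 (le_max_right _ _)) (max_le_max_right 0 hab)
  have hset : MeasurableSet {z : ℝ × ℝ | φ (max z.1 0) < z.2} :=
    measurableSet_lt (hφmeas.comp measurable_fst) measurable_snd
  let w : ℝ → ENNReal := fun l => ENNReal.ofReal (p * l ^ (p - 1))
  let e : ℝ → ENNReal := fun y => ENNReal.ofReal (t * Real.exp (-(t * y)))
  have hw : Measurable w := by fun_prop
  have he : Measurable e := by fun_prop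
  calc ENNReal.ofReal (Real.Gamma (p + 1)) * ∫⁻ x, ENNReal.ofReal (x ^ (-p)) ∂m
      = ∫⁻ x, ENNReal.ofReal (Real.Gamma (p + 1)) * ENNReal.ofReal (x ^ (-p)) ∂m :=
        (lintegral_const_mul _ (by fun_prop)).symm
    _ = ∫⁻ x, (∫⁻ l in Ioi (0 : ℝ), w l * ENNReal.ofReal (Real.exp (-l * x))) ∂m := by
        refine lintegral_congr_ae ?_
        filter_upwards [hpos] with x hx
        exact (lintegral_rpow_mul_exp_neg_mul (by linarith) hx).symm
    _ = ∫⁻ l in Ioi (0 : ℝ), (∫⁻ x, w l * ENNReal.ofReal (Real.exp (-l * x)) ∂m) :=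
        lintegral_lintegral_swap (by fun_prop)
    _ = ∫⁻ l in Ioi (0 : ℝ), ∫⁻ y in Ioi (0 : ℝ),
          {z : ℝ × ℝ | φ (max z.1 0) < z.2}.indicator (fun z => w z.1 * e z.2) (l, y) := by
        refine setLIntegral_congr_fun measurableSet_Ioi fun l hl => ?_
        have hl' : (0 : ℝ) < l := hl
        have hφl : 0 ≤ φ l := h0 ▸ hmono self_mem_Ici hl'.le hl'.le
        rw [lintegral_const_mul _ (by fun_prop), ← ofReal_integral_eq_lintegral_ofReal
          (integrable_exp_neg_mul hpos hl'.le) (ae_of_all _ fun x => (Real.exp_pos _).le),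
          hlap l hl'.le, ← lintegral_Ioi_mul_exp ht, ← lintegral_const_mul _ he]
        rw [← lintegral_indicator measurableSet_Ioi, ← lintegral_indicator measurableSet_Ioi]
        refine lintegral_congr fun y => ?_
        simp only [indicator, mem_Ioi, mem_ofPred_eq, max_eq_left hl'.le]
        by_cases hy : φ l < y
        · rw [if_pos hy, if_pos (hφl.trans_lt hy)]
        · simp [hy]
    _ = ∫⁻ y in Ioi (0 : ℝ), ∫⁻ l in Ioi (0 : ℝ),
          {z : ℝ × ℝ | φ (max z.1 0) < z.2}.indicator (fun z => w z.1 * e z.2) (l, y) :=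
        lintegral_lintegral_swap (Measurable.indicator (by fun_prop) hset).aemeasurable
    _ = ∫⁻ y in Ioi (0 : ℝ), e y * ENNReal.ofReal (Ψ y ^ p) := by
        refine setLIntegral_congr_fun measurableSet_Ioi fun y hy => ?_
        have hy' : (0 : ℝ) < y := hy
        obtain ⟨hΨ0, hiff⟩ := hΨ y hy'.le
        rw [← lintegral_Ioo_mul_rpow hp hΨ0, ← lintegral_const_mul _ hw,
          ← lintegral_indicator measurableSet_Ioi, ← lintegral_indicator measurableSet_Ioo]
        refine lintegral_congr fun l => ?_
        by_cases hl : 0 < l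
        · simp [indicator, hl, max_eq_left hl.le, hiff l hl.le, mul_comm, w]
        · simp [indicator, hl]

end Subordinator

section Exponent

variable {ν : Measure ℝ} {G : ℝ → ℝ} {c γ : ℝ}

theorem lintegral_exp_mul_exponent [SFinite ν] (hpos : ∀ᵐ x ∂ν, 0 < x)
    (hm : Integrable (fun x => x * min x 1) ν) (hc : 0 ≤ c) {t : ℝ} (ht : 0 < t)
    (hG : ∀ y, 0 ≤ y → G y = c * y + γ ^ 2 / 2 * y ^ 2 +
      ∫ x, (Real.exp (-(y * x)) - 1 + y * x) ∂ν) :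
    ∫⁻ y in Ioi (0 : ℝ), ENNReal.ofReal (t * Real.exp (-(t * y))) * ENNReal.ofReal (G y) =
      ENNReal.ofReal (t⁻¹ * (c + γ ^ 2 / t + ∫ u, u ^ 2 / (t + u) ∂ν)) := by
  have hfin_int := (integrable_sq_div_add hpos hm ht).const_mul t⁻¹
  have hnn : ∀ᵐ u ∂ν, 0 ≤ t⁻¹ * (u ^ 2 / (t + u)) := by
    filter_upwards [hpos] with u hu
    positivity
  have hsplit : ∀ y ∈ Ioi (0 : ℝ),
      ENNReal.ofReal (t * Real.exp (-(t * y))) * ENNReal.ofReal (G y) =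
        ENNReal.ofReal (t * Real.exp (-(t * y)) * (c * y + γ ^ 2 / 2 * y ^ 2)) +
          ∫⁻ x, ENNReal.ofReal
            (t * Real.exp (-(t * y)) * (Real.exp (-(y * x)) - 1 + y * x)) ∂ν := by
    intro y hy
    have hy' : (0 : ℝ) < y := hy
    have hk : 0 ≤ ∫ x, (Real.exp (-(y * x)) - 1 + y * x) ∂ν :=
      integral_nonneg fun x => exp_neg_sub_one_add_nonneg _
    rw [← ofReal_integral_eq_lintegral_ofReal
      ((integrable_exp_sub_one_add hpos hm hy'.le).const_mul _)
      (ae_of_all _ fun x => mul_nonneg (by positivity) (exp_neg_sub_one_add_nonneg _)),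
      integral_const_mul, hG y hy'.le, ← ENNReal.ofReal_mul (by positivity),
      ← ENNReal.ofReal_add (by positivity) (by positivity)]
    ring_nf
  rw [setLIntegral_congr_fun measurableSet_Ioi hsplit, lintegral_add_left (by fun_prop),
    lintegral_exp_mul_quadratic hc (by positivity) ht, lintegral_lintegral_swap (by fun_prop)]
  have hinner : ∫⁻ x, (∫⁻ y in Ioi (0 : ℝ), ENNReal.ofReal
      (t * Real.exp (-(t * y)) * (Real.exp (-(y * x)) - 1 + y * x))) ∂ν =
        ∫⁻ x, ENNReal.ofReal (t⁻¹ * (x ^ 2 / (t + x))) ∂ν := by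
    refine lintegral_congr_ae ?_
    filter_upwards [hpos] with x hx
    exact lintegral_exp_mul_exp_sub_one_add ht hx
  rw [hinner, ← ofReal_integral_eq_lintegral_ofReal hfin_int hnn,
    ← ENNReal.ofReal_add (by positivity) (integral_nonneg_of_ae hnn), integral_const_mul]
  congr 1
  field_simp

theorem tendsto_deriv_exponent (hpos : ∀ᵐ x ∂ν, 0 < x)
    (hm : Integrable (fun x => x * min x 1) ν)
    (hG : ∀ y, 0 ≤ y → G y = c * y + γ ^ 2 / 2 * y ^ 2 +
      ∫ x, (Real.exp (-(y * x)) - 1 + y * x) ∂ν) :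
    Tendsto (deriv G) (nhdsWithin 0 (Ioi 0)) (nhds c) := by
  have hderiv : ∀ y ∈ Ioi (0 : ℝ),
      c + γ ^ 2 * y + ∫ x, x * (1 - Real.exp (-(y * x))) ∂ν = deriv G y := by
    intro y hy
    have h1 : HasDerivAt (fun y => c * y + γ ^ 2 / 2 * y ^ 2) (c + γ ^ 2 * y) y := by
      refine (((hasDerivAt_id y).const_mul c).add
        ((hasDerivAt_pow 2 y).const_mul (γ ^ 2 / 2))).congr_deriv ?_
      simp
      ring
    refine ((h1.add (hasDerivAt_integral_exp_sub_one_add hpos hm hy)).congr_of_eventuallyEq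
      ?_).deriv.symm
    filter_upwards [Ioi_mem_nhds hy] with z hz
    exact hG z (le_of_lt hz)
  have hlin : Tendsto (fun y : ℝ => c + γ ^ 2 * y) (nhdsWithin 0 (Ioi 0)) (nhds c) := by
    have : Continuous fun y : ℝ => c + γ ^ 2 * y := by fun_prop
    simpa using (this.tendsto 0).mono_left nhdsWithin_le_nhds
  have h := hlin.add (tendsto_integral_mul_one_sub_exp hpos hm)
  rw [add_zero] at h
  exact h.congr' (eventually_nhdsWithin_of_forall hderiv)

theorem isStieltjesFn_of_eq (hsupp : ν {x | x ≤ 0} = 0) {f : ℝ → ℝ} {d q C : ℝ}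
    (hd : 0 ≤ d) (hq : 0 ≤ q) (hC : 0 ≤ C) (hfin_int : Integrable (fun u => u ^ 2 / (1 + u)) ν)
    (hf : ∀ t, 0 < t → f t = d + q / t + C * ∫ u, u ^ 2 / (t + u) ∂ν) : IsStieltjesFn f := by
  have hmeas : Measurable fun u : ℝ => ENNReal.ofReal (C * u ^ 2) := by fun_prop
  refine ⟨d, q, hd, hq, ν.withDensity fun u => ENNReal.ofReal (C * u ^ 2),
    withDensity_absolutelyContinuous _ _ hsupp, ?_, fun t ht => ?_⟩
  · rw [lintegral_withDensity_eq_lintegral_mul _ hmeas (by fun_prop)]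
    refine lt_of_eq_of_lt (lintegral_congr fun u => ?_)
      (hfin_int.const_mul C).lintegral_lt_top
    rw [Pi.mul_apply, ← ENNReal.ofReal_mul (by positivity)]
    ring_nf
  · rw [integral_withDensity_eq_integral_toReal_smul hmeas
      (ae_of_all _ fun u => ENNReal.ofReal_lt_top), hf t ht, ← integral_const_mul]
    congr 1
    refine integral_congr_ae (ae_of_all _ fun u => ?_)
    simp only [smul_eq_mul]
    rw [ENNReal.toReal_ofReal (by positivity)]
    ring

end Exponent

/-- Let `φ` be a non-affine Bernstein function with `φ(0) = 0`, `φ(∞) = ∞`,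
inverse `Ψ`, marginal subordinator laws `(μ_t)_{t>0}`, and `p ≥ 1` with
`Ψ^p ∈ Lle(0,∞)` with quadruple `(0, β_p, γ_p, ν_p)`. Then
`(Ψ^p)'(0+) = β_p − ∫ x³/(1+x²) ν_p(dx) ∈ [0,∞)`, and for every `t > 0`,
`t·E[ξ_t^{−p}] = (1/Γ(p+1)) [(Ψ^p)'(0+) + γ_p²/t + ∫ u²/(t+u) ν_p(du)]`; in particular
`t ↦ t·E[ξ_t^{−p}]` is a Stieltjes transform. -/
theorem stmt_9 (φ Ψ : ℝ → ℝ) (hφ : IsBernsteinFn φ)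
    (hnonaffine : ¬∃ c d : ℝ, ∀ x : ℝ, 0 ≤ x → φ x = c + d * x)
    (h0 : φ 0 = 0) (hinf : Tendsto φ atTop atTop) (hinv : Set.InvOn Ψ φ (Ici 0) (Ici 0))
    (μ : ℝ → Measure ℝ) (hprob : ∀ t : ℝ, 0 < t → IsProbabilityMeasure (μ t))
    (hsupp : ∀ t : ℝ, 0 < t → μ t {x | x ≤ 0} = 0)
    (hlaplace : ∀ t : ℝ, 0 < t → ∀ l : ℝ, 0 ≤ l →
      ∫ x, Real.exp (-l * x) ∂(μ t) = Real.exp (-t * φ l))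
    (p : ℝ) (hp : 1 ≤ p)
    (β γ : ℝ) (hγ : 0 ≤ γ) (ν : Measure ℝ) (hν_supp : ν {x | x ≤ 0} = 0)
    (hν_int : (∫⁻ x, ENNReal.ofReal (min (x ^ 2) 1) ∂ν) < ⊤)
    (hLle : ∀ l : ℝ, 0 ≤ l →
      Ψ l ^ p = β * l + γ ^ 2 / 2 * l ^ 2 +
        ∫ x, (Real.exp (-l * x) - 1 + l * x / (1 + x ^ 2)) ∂ν) :
    Integrable (fun x => x ^ 3 / (1 + x ^ 2)) ν ∧
    0 ≤ β - ∫ x, x ^ 3 / (1 + x ^ 2) ∂ν ∧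
    Tendsto (deriv (fun y => Ψ y ^ p)) (nhdsWithin 0 (Ioi 0))
      (nhds (β - ∫ x, x ^ 3 / (1 + x ^ 2) ∂ν)) ∧
    (∀ t : ℝ, 0 < t →
      t * (∫⁻ x, ENNReal.ofReal (x ^ (-p)) ∂(μ t)).toReal =
        (1 / Real.Gamma (p + 1)) *
          ((β - ∫ x, x ^ 3 / (1 + x ^ 2) ∂ν) + γ ^ 2 / t + ∫ u, u ^ 2 / (t + u) ∂ν)) ∧
    IsStieltjesFn (fun t => t * (∫⁻ x, ENNReal.ofReal (x ^ (-p)) ∂(μ t)).toReal) := by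
  have hνpos := ae_pos_of_measure_nonpos_eq_zero hν_supp
  have hμpos : ∀ t : ℝ, 0 < t → ∀ᵐ x ∂(μ t), 0 < x := fun t ht =>
    ae_pos_of_measure_nonpos_eq_zero (hsupp t ht)
  have hprob1 := hprob 1 one_pos
  obtain ⟨hcont, hmono⟩ := continuousOn_monotoneOn_of_laplace (φ := φ) (hμpos 1 one_pos)
    (fun l hl => by simpa using hlaplace 1 one_pos l hl)
  have hΨ : ∀ y, 0 ≤ y → 0 ≤ Ψ y ∧ ∀ l, 0 ≤ l → (l < Ψ y ↔ φ l < y) := fun y hy =>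
    inverse_nonneg_and_lt_iff hcont hmono h0 hinf hinv.1 hy
  obtain ⟨h3, h3le⟩ := integrable_and_integral_le_of_exponent_nonneg hνpos hν_int
    (fun l hl => (hLle l hl) ▸ Real.rpow_nonneg (hΨ l hl).1 p)
  have hm := integrable_mul_min_one hνpos hν_int h3
  have := sFinite_of_lintegral_min_sq_one hνpos hν_int
  set c : ℝ := β - ∫ x, x ^ 3 / (1 + x ^ 2) ∂ν with hc
  have hc0 : 0 ≤ c := sub_nonneg.2 h3le
  have hexp : ∀ y, 0 ≤ y → Ψ y ^ p = c * y + γ ^ 2 / 2 * y ^ 2 +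
      ∫ x, (Real.exp (-(y * x)) - 1 + y * x) ∂ν := by
    intro y hy
    rw [hLle y hy, integral_compensated_exp_eq hνpos h3 hm hy, hc]
    ring
  have hΓ : 0 < Real.Gamma (p + 1) := Real.Gamma_pos_of_pos (by linarith)
  have hformula : ∀ t : ℝ, 0 < t →
      t * (∫⁻ x, ENNReal.ofReal (x ^ (-p)) ∂(μ t)).toReal =
        (1 / Real.Gamma (p + 1)) * (c + γ ^ 2 / t + ∫ u, u ^ 2 / (t + u) ∂ν) := by
    intro t ht
    have := hprob t ht
    have h := gamma_mul_lintegral_rpow_neg_eq (hμpos t ht) ht hp (hlaplace t ht) hmono h0 hΨ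
    rw [lintegral_exp_mul_exponent hνpos hm hc0 ht hexp] at h
    have h' := congrArg ENNReal.toReal h
    rw [ENNReal.toReal_mul, ENNReal.toReal_ofReal hΓ.le, ENNReal.toReal_ofReal] at h'
    · field_simp at h' ⊢
      linarith
    · have : 0 ≤ ∫ u, u ^ 2 / (t + u) ∂ν := integral_nonneg_of_ae <| by
        filter_upwards [hνpos] with u hu
        simp only [Pi.zero_apply]
        positivity
      positivity
  refine ⟨h3, hc0, tendsto_deriv_exponent hνpos hm hexp, hformula, ?_⟩
  refine isStieltjesFn_of_eq hν_supp (d := c / Real.Gamma (p + 1))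
    (q := γ ^ 2 / Real.Gamma (p + 1)) (C := 1 / Real.Gamma (p + 1)) (by positivity) (by positivity)
    (by positivity) (integrable_sq_div_add hνpos hm one_pos) fun t ht => ?_
  rw [hformula t ht]
  ring
end
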